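/- Let n ≥ 1, let V : ℝⁿ → ℝ be bounded, continuous and satisfy V(x) > 0 for all x, and let u : [0,∞) × ℝⁿ → ℝ be a smooth solution of ∂ₜ²u − Δₓu + V·u + ∂ₜu = 0 with u(0,·) = u₀ ∈ Cc^∞(ℝⁿ), ∂ₜu(0,·) = u₁ ∈ Cc^∞(ℝⁿ), such that for every T > 0 there is R > 0 with u(t,·) supported in the ball of radius R for all t ∈ [0,T]. If ∫_{ℝⁿ} |u₁(x)+u₀(x)|²/V(x) dx < ∞, then for all t ≥ 0: ∫₀ᵗ ‖u(s,·)‖² ds ≤ ½‖u₀‖² + ∫_{ℝⁿ} |u₁(x)+u₀(x)|²/V(x) dx. -/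

import Mathlib

open MeasureTheory

noncomputable section

/-- The Laplacian of `f : ℝⁿ → ℝ`, as the sum of second derivatives in the
coordinate directions. -/
def lap {n : ℕ} (f : EuclideanSpace ℝ (Fin n) → ℝ) (x : EuclideanSpace ℝ (Fin n)) : ℝ :=
  ∑ i : Fin n, iteratedFDeriv ℝ 2 f x ![EuclideanSpace.single i 1, EuclideanSpace.single i 1]

/-!
For fixed `x`, integrating the equation once in time gives, with `v = ∫₀ᵗ u` and `f = u₁ + u₀`,
`∂ₜu + u + V v = f + ∫₀ᵗ Δu`. Multiplying by `u = ∂ₜv` and integrating over `[0, t]` yields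
`∫₀ᵗ u² + u(t)² / 2 + V v(t)² / 2 = u₀² / 2 + f v(t) + ∫₀ᵗ u(s) ∫₀ˢ Δu`, where Young's inequality
`f v ≤ f² / (2 V) + V v² / 2` absorbs `f v(t)`. After integration in `x` the last term is
`-‖∇v(t)‖² / 2 ≤ 0`: integrate by parts in space and use that `∇u = ∂ₜ∇v`.
-/

open Set Function InnerProductSpace
open scoped Laplacian

section DampedOscillator

variable {y w : ℝ → ℝ} {c t : ℝ}

theorem integral_mul_deriv_self {f f' : ℝ → ℝ} (hf : ∀ s, HasDerivAt f (f' s) s)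
    (hf' : Continuous f') (a b : ℝ) :
    ∫ s in a..b, f s * f' s = (f b ^ 2 - f a ^ 2) / 2 :=
  (intervalIntegral.integral_comp_mul_deriv (fun s _ ↦ hf s) hf'.continuousOn
    continuous_id).trans integral_id

theorem integral_mul_primitive_self (hy : Continuous y) (t : ℝ) :
    ∫ s in (0:ℝ)..t, y s * ∫ r in (0:ℝ)..s, y r = (∫ s in (0:ℝ)..t, y s) ^ 2 / 2 := by
  simpa [mul_comm] using integral_mul_deriv_self
    (fun s ↦ (hy.integral_hasStrictDerivAt 0 s).hasDerivAt) hy 0 t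

theorem damped_oscillator_integrated (hy : ContDiff ℝ 2 y)
    (hode : ∀ s ∈ uIcc 0 t, deriv (deriv y) s - w s + c * y s + deriv y s = 0) :
    deriv y t + y t + c * ∫ s in (0:ℝ)..t, y s
      = deriv y 0 + y 0 + ∫ s in (0:ℝ)..t, w s := by
  have hy' : ContDiff ℝ 1 (deriv y) := hy.deriv'
  have hyc := hy.continuous
  have hyc' := hy'.continuous
  have hdiff := hy.differentiable two_ne_zero
  have hdiff' := hy'.differentiable one_ne_zero
  have hderiv (s : ℝ) : HasDerivAt (fun s ↦ deriv y s + y s + c * ∫ r in (0:ℝ)..s, y r)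
      (deriv (deriv y) s + deriv y s + c * y s) s :=
    ((hdiff' s).hasDerivAt.add (hdiff s).hasDerivAt).add
      ((hyc.integral_hasStrictDerivAt 0 s).hasDerivAt.const_mul c)
  have hw : ∫ s in (0:ℝ)..t, w s
      = ∫ s in (0:ℝ)..t, (deriv (deriv y) s + deriv y s + c * y s) := by
    refine intervalIntegral.integral_congr fun s hs ↦ ?_
    linarith [hode s hs]
  rw [hw, intervalIntegral.integral_eq_sub_of_hasDerivAt (fun s _ ↦ hderiv s)
    (Continuous.intervalIntegrable (by fun_prop) _ _), intervalIntegral.integral_same]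
  ring

theorem damped_oscillator_energy_identity (hy : ContDiff ℝ 2 y)
    (hode : ∀ s ∈ uIcc 0 t, deriv (deriv y) s - w s + c * y s + deriv y s = 0) :
    (∫ s in (0:ℝ)..t, y s ^ 2) + y t ^ 2 / 2 + c * (∫ s in (0:ℝ)..t, y s) ^ 2 / 2
      = y 0 ^ 2 / 2 + (deriv y 0 + y 0) * (∫ s in (0:ℝ)..t, y s)
        + ∫ s in (0:ℝ)..t, y s * ∫ r in (0:ℝ)..s, w r := by
  have hyc := hy.continuous
  have hyc' := hy.continuous_deriv one_le_two
  have hdiff := hy.differentiable two_ne_zero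
  have hmul : ∫ s in (0:ℝ)..t, y s * ∫ r in (0:ℝ)..s, w r
      = ∫ s in (0:ℝ)..t, (y s ^ 2 + y s * deriv y s + c * (y s * ∫ r in (0:ℝ)..s, y r)
          - (deriv y 0 + y 0) * y s) := by
    refine intervalIntegral.integral_congr fun s hs ↦ ?_
    have := damped_oscillator_integrated hy fun r hr ↦ hode r (uIcc_subset_uIcc_left hs hr)
    linear_combination -y s * this
  rw [hmul, intervalIntegral.integral_sub, intervalIntegral.integral_add,
    intervalIntegral.integral_add, intervalIntegral.integral_const_mul,
    intervalIntegral.integral_const_mul, integral_mul_primitive_self hyc,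
    integral_mul_deriv_self (fun s ↦ (hdiff s).hasDerivAt) hyc']
  · ring
  all_goals exact Continuous.intervalIntegrable (by fun_prop) _ _

theorem damped_oscillator_integral_sq_le (hc : 0 < c) (hy : ContDiff ℝ 2 y)
    (hode : ∀ s ∈ uIcc 0 t, deriv (deriv y) s - w s + c * y s + deriv y s = 0) :
    ∫ s in (0:ℝ)..t, y s ^ 2
      ≤ 1 / 2 * y 0 ^ 2 + 1 / 2 * ((deriv y 0 + y 0) ^ 2 / c)
        + ∫ s in (0:ℝ)..t, y s * ∫ r in (0:ℝ)..s, w r := by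
  have henergy := damped_oscillator_energy_identity hy hode
  have young (a b : ℝ) : a * b ≤ 1 / 2 * (a ^ 2 / c) + c * b ^ 2 / 2 := by
    have : 1 / 2 * (a ^ 2 / c) + c * b ^ 2 / 2 - a * b = (a - c * b) ^ 2 / (2 * c) := by
      field_simp
      ring
    have : 0 ≤ (a - c * b) ^ 2 / (2 * c) := by positivity
    linarith
  linarith [young (deriv y 0 + y 0) (∫ s in (0:ℝ)..t, y s), sq_nonneg (y t)]

end DampedOscillator

section TimePrimitive

variable {E F : Type*} [NormedAddCommGroup E] [NormedSpace ℝ E]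
  [NormedAddCommGroup F] [NormedSpace ℝ F]

/-- The time primitive `v(t, x) = ∫₀ᵗ u(s, x) ds` of a space-time function `u`. -/
def timePrimitive {X : Type*} (u : ℝ → X → F) (t : ℝ) (x : X) : F :=
  ∫ s in (0:ℝ)..t, u s x

theorem continuous_uncurry_timePrimitive {X : Type*} [TopologicalSpace X] {u : ℝ → X → F}
    (hu : Continuous (uncurry u)) : Continuous (uncurry (timePrimitive u)) :=
  intervalIntegral.continuous_parametric_intervalIntegral_of_continuous
    (f := fun (p : ℝ × X) s ↦ u s p.2) (hu.comp (continuous_snd.prodMk continuous_fst.snd))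
    continuous_fst

theorem contDiff_uncurry_fderiv {u : ℝ → E → F} {m n : WithTop ℕ∞}
    (hu : ContDiff ℝ n (uncurry u)) (hmn : m + 1 ≤ n) :
    ContDiff ℝ m (uncurry fun s x ↦ fderiv ℝ (u s) x) :=
  ContDiff.fderiv (f := fun (p : ℝ × E) x ↦ u p.1 x)
    (hu.comp (contDiff_fst.fst.prodMk contDiff_snd)) contDiff_snd hmn

theorem contDiff_uncurry_fderiv_apply {u : ℝ → E → F} {m n : WithTop ℕ∞}
    (hu : ContDiff ℝ n (uncurry u)) (hmn : m + 1 ≤ n) (e : E) :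
    ContDiff ℝ m (uncurry fun s x ↦ fderiv ℝ (u s) x e) :=
  (contDiff_uncurry_fderiv hu hmn).clm_apply contDiff_const

theorem continuous_uncurry_fderiv_fderiv_apply {u : ℝ → E → F}
    (hu : ContDiff ℝ 2 (uncurry u)) (e : E) :
    Continuous (uncurry fun s x ↦ fderiv ℝ (fun y ↦ fderiv ℝ (u s) y e) x e) :=
  (contDiff_uncurry_fderiv_apply (contDiff_uncurry_fderiv_apply hu one_add_one_eq_two.le e)
    (zero_add 1).le e).continuous

theorem hasFDerivAt_timePrimitive [ProperSpace E] {u : ℝ → E → F}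
    (hu : ContDiff ℝ 1 (uncurry u)) (t : ℝ) (x : E) :
    HasFDerivAt (timePrimitive u t) (∫ s in (0:ℝ)..t, fderiv ℝ (u s) x) x := by
  have hu' : Continuous (uncurry fun s x ↦ fderiv ℝ (u s) x) :=
    (contDiff_uncurry_fderiv hu (zero_add 1).le).continuous
  have hslice (s : ℝ) : Differentiable ℝ (u s) :=
    (hu.comp (contDiff_prodMk_right s)).differentiable one_ne_zero
  obtain ⟨C, hC⟩ := (isCompact_uIcc.prod (isCompact_closedBall x 1)).exists_bound_of_continuousOn
    (s := uIcc 0 t ×ˢ Metric.closedBall x 1) hu'.continuousOn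
  exact intervalIntegral.hasFDerivAt_integral_of_dominated_of_fderiv_le
    (F := fun x s ↦ u s x) (F' := fun x s ↦ fderiv ℝ (u s) x) (bound := fun _ ↦ C)
    (Metric.closedBall_mem_nhds x one_pos)
    (.of_forall fun y ↦ (hu.continuous.uncurry_right y).aestronglyMeasurable)
    ((hu.continuous.uncurry_right x).intervalIntegrable _ _)
    (hu'.uncurry_right x).aestronglyMeasurable
    (.of_forall fun s hs y hy ↦ hC (s, y) ⟨uIoc_subset_uIcc hs, hy⟩)
    intervalIntegrable_const
    (.of_forall fun s _ y _ ↦ (hslice s y).hasFDerivAt)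

theorem fderiv_timePrimitive_apply [ProperSpace E] {u : ℝ → E → F}
    (hu : ContDiff ℝ 1 (uncurry u)) (t : ℝ) (x e : E) :
    fderiv ℝ (timePrimitive u t) x e = timePrimitive (fun s x ↦ fderiv ℝ (u s) x e) t x := by
  have hu' : Continuous (uncurry fun s x ↦ fderiv ℝ (u s) x) :=
    (contDiff_uncurry_fderiv hu (zero_add 1).le).continuous
  rw [(hasFDerivAt_timePrimitive hu t x).fderiv]
  exact ContinuousLinearMap.intervalIntegral_apply
    ((hu'.uncurry_right x).intervalIntegrable _ _) e

end TimePrimitive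

section SpaceTimeIntegrals

variable {X G : Type*} [TopologicalSpace X] [T2Space X] [SecondCountableTopology X]
  [MeasurableSpace X] [OpensMeasurableSpace X] {μ : Measure X} [IsFiniteMeasureOnCompacts μ]
  [SFinite μ] [NormedAddCommGroup G] {f : ℝ → X → G} {K : Set X} {a b : ℝ}

theorem integrable_uncurry_of_eq_zero_off_compact (hf : Continuous (uncurry f))
    (hK : IsCompact K) (hfK : ∀ s ∈ uIcc a b, ∀ x ∉ K, f s x = 0) :
    Integrable (uncurry f) ((volume.restrict (uIoc a b)).prod μ) := by
  have hcompact : IntegrableOn (uncurry f) (uIcc a b ×ˢ K) (volume.prod μ) :=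
    hf.continuousOn.integrableOn_compact (isCompact_uIcc.prod hK)
  have hstrip : IntegrableOn (uncurry f) (uIoc a b ×ˢ univ) (volume.prod μ) := by
    refine hcompact.of_forall_sdiff_eq_zero (measurableSet_uIoc.prod .univ) ?_
    rintro ⟨s, x⟩ ⟨⟨hs, -⟩, hsx⟩
    exact hfK s (uIoc_subset_uIcc hs) x fun hx ↦ hsx ⟨uIoc_subset_uIcc hs, hx⟩
  rwa [IntegrableOn, ← Measure.prod_restrict, Measure.restrict_univ] at hstrip

theorem intervalIntegral_integral_swap_of_eq_zero_off_compact [NormedSpace ℝ G]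
    (hf : Continuous (uncurry f)) (hK : IsCompact K)
    (hfK : ∀ s ∈ uIcc a b, ∀ x ∉ K, f s x = 0) :
    ∫ s in a..b, ∫ x, f s x ∂μ = ∫ x, (∫ s in a..b, f s x) ∂μ :=
  intervalIntegral_integral_swap (integrable_uncurry_of_eq_zero_off_compact hf hK hfK)

theorem integrable_intervalIntegral_of_eq_zero_off_compact [NormedSpace ℝ G]
    (hf : Continuous (uncurry f)) (hK : IsCompact K)
    (hfK : ∀ s ∈ uIcc a b, ∀ x ∉ K, f s x = 0) :
    Integrable (fun x ↦ ∫ s in a..b, f s x) μ := by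
  simp only [intervalIntegral.intervalIntegral_eq_integral_uIoc]
  exact (integrable_uncurry_of_eq_zero_off_compact hf hK hfK).integral_prod_right.smul _

end SpaceTimeIntegrals

section IntegrationByParts

theorem fderiv_eq_zero_of_eq_zero_off_closed {E F : Type*} [NormedAddCommGroup E]
    [NormedSpace ℝ E] [NormedAddCommGroup F] [NormedSpace ℝ F] {f : E → F} {K : Set E}
    (hK : IsClosed K) (hf : ∀ x ∉ K, f x = 0) {x : E} (hx : x ∉ K) : fderiv ℝ f x = 0 := by
  have hzero : f =ᶠ[nhds x] fun _ ↦ 0 := by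
    filter_upwards [hK.isOpen_compl.mem_nhds hx] with y hy using hf y hy
  rw [hzero.fderiv_eq, fderiv_fun_const, Pi.zero_apply]

variable {E : Type*} [NormedAddCommGroup E] [NormedSpace ℝ E] [FiniteDimensional ℝ E]
  [MeasurableSpace E] [BorelSpace E] {μ : Measure E} [μ.IsAddHaarMeasure]

theorem integral_mul_fderiv_eq_neg_of_hasCompactSupport {f g : E → ℝ} {e : E}
    (hf : ContDiff ℝ 1 f) (hfsupp : HasCompactSupport f) (hg : Differentiable ℝ g)
    (hg' : Continuous fun x ↦ fderiv ℝ g x e) :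
    ∫ x, f x * fderiv ℝ g x e ∂μ = -∫ x, fderiv ℝ f x e * g x ∂μ := by
  have hf' : Continuous fun x ↦ fderiv ℝ f x e :=
    (hf.continuous_fderiv one_ne_zero).clm_apply continuous_const
  exact integral_mul_fderiv_eq_neg_fderiv_mul_of_integrable
    ((hf'.mul hg.continuous).integrable_of_hasCompactSupport (hfsupp.fderiv_apply ℝ e).mul_right)
    ((hf.continuous.mul hg').integrable_of_hasCompactSupport hfsupp.mul_right)
    ((hf.continuous.mul hg.continuous).integrable_of_hasCompactSupport hfsupp.mul_right)
    (fun x _ ↦ hf.differentiable one_ne_zero x) (fun x _ ↦ hg x)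

variable {u g : ℝ → E → ℝ} {K : Set E} {t : ℝ}

theorem integral_intervalIntegral_mul_fderiv_eq_neg {a b : ℝ} {e : E}
    (hu : ContDiff ℝ 1 (uncurry u)) (hK : IsCompact K)
    (huK : ∀ s ∈ uIcc a b, ∀ x ∉ K, u s x = 0) (hg : Continuous (uncurry g))
    (hgd : ∀ s, Differentiable ℝ (g s)) (hg' : Continuous (uncurry fun s x ↦ fderiv ℝ (g s) x e)) :
    ∫ x, (∫ s in a..b, u s x * fderiv ℝ (g s) x e) ∂μ
      = -∫ x, (∫ s in a..b, fderiv ℝ (u s) x e * g s x) ∂μ := by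
  have hu' : Continuous (uncurry fun s x ↦ fderiv ℝ (u s) x e) :=
    (contDiff_uncurry_fderiv_apply hu (zero_add 1).le e).continuous
  have hu'K : ∀ s ∈ uIcc a b, ∀ x ∉ K, fderiv ℝ (u s) x e = 0 := fun s hs x hx ↦ by
    rw [fderiv_eq_zero_of_eq_zero_off_closed hK.isClosed (huK s hs) hx, zero_apply]
  calc ∫ x, (∫ s in a..b, u s x * fderiv ℝ (g s) x e) ∂μ
      = ∫ s in a..b, ∫ x, u s x * fderiv ℝ (g s) x e ∂μ :=
        (intervalIntegral_integral_swap_of_eq_zero_off_compact (hu.continuous.mul hg') hK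
          fun s hs x hx ↦ by rw [huK s hs x hx, zero_mul]).symm
    _ = ∫ s in a..b, -∫ x, fderiv ℝ (u s) x e * g s x ∂μ :=
        intervalIntegral.integral_congr fun s hs ↦
          integral_mul_fderiv_eq_neg_of_hasCompactSupport (hu.comp (contDiff_prodMk_right s))
            (HasCompactSupport.intro hK (huK s hs)) (hgd s) (hg'.uncurry_left s)
    _ = -∫ x, (∫ s in a..b, fderiv ℝ (u s) x e * g s x) ∂μ := by
        rw [intervalIntegral.integral_neg,
          intervalIntegral_integral_swap_of_eq_zero_off_compact (hu'.mul hg) hK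
            fun s hs x hx ↦ by rw [hu'K s hs x hx, zero_mul]]

theorem integral_intervalIntegral_mul_timePrimitive_fderiv_fderiv {e : E}
    (hu : ContDiff ℝ 2 (uncurry u)) (hK : IsCompact K) (huK : ∀ s ∈ uIcc 0 t, ∀ x ∉ K, u s x = 0) :
    ∫ x, (∫ s in (0:ℝ)..t,
        u s x * timePrimitive (fun r y ↦ fderiv ℝ (fun z ↦ fderiv ℝ (u r) z e) y e) s x) ∂μ
      = -∫ x, timePrimitive (fun r y ↦ fderiv ℝ (u r) y e) t x ^ 2 / 2 ∂μ := by
  let g : ℝ → E → ℝ := fun r y ↦ fderiv ℝ (u r) y e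
  have hg : ContDiff ℝ 1 (uncurry g) := contDiff_uncurry_fderiv_apply hu one_add_one_eq_two.le e
  have hderiv : (fun s x ↦ fderiv ℝ (timePrimitive g s) x e)
      = timePrimitive fun s x ↦ fderiv ℝ (g s) x e :=
    funext₂ fun s x ↦ fderiv_timePrimitive_apply hg s x e
  have hderiv_cont : Continuous (uncurry fun s x ↦ fderiv ℝ (timePrimitive g s) x e) :=
    hderiv ▸ continuous_uncurry_timePrimitive (continuous_uncurry_fderiv_fderiv_apply hu e)
  calc ∫ x, (∫ s in (0:ℝ)..t, u s x * timePrimitive (fun r y ↦ fderiv ℝ (g r) y e) s x) ∂μ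
      = ∫ x, (∫ s in (0:ℝ)..t, u s x * fderiv ℝ (timePrimitive g s) x e) ∂μ := by
        simp only [fderiv_timePrimitive_apply hg]
    _ = -∫ x, (∫ s in (0:ℝ)..t, g s x * timePrimitive g s x) ∂μ :=
        integral_intervalIntegral_mul_fderiv_eq_neg (hu.of_le one_le_two) hK huK
          (continuous_uncurry_timePrimitive hg.continuous)
          (fun s x ↦ (hasFDerivAt_timePrimitive hg s x).differentiableAt) hderiv_cont
    _ = -∫ x, timePrimitive g t x ^ 2 / 2 ∂μ := by
        congr! with x
        exact integral_mul_primitive_self (hg.continuous.uncurry_right x) t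

end IntegrationByParts

section Laplacian

variable {E : Type*} [NormedAddCommGroup E] [InnerProductSpace ℝ E] [FiniteDimensional ℝ E]

theorem lap_eq_laplacian {n : ℕ} (f : EuclideanSpace ℝ (Fin n) → ℝ) : lap f = Δ f := by
  simp only [laplacian_eq_iteratedFDeriv_orthonormalBasis f (EuclideanSpace.basisFun (Fin n) ℝ),
    EuclideanSpace.basisFun_apply]
  rfl

theorem laplacian_eq_sum_fderiv_fderiv {F ι : Type*} [NormedAddCommGroup F] [NormedSpace ℝ F]
    [Fintype ι] (b : OrthonormalBasis ι ℝ E) {f : E → F} (hf : ContDiff ℝ 2 f) (x : E) :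
    Δ f x = ∑ i, fderiv ℝ (fun y ↦ fderiv ℝ f y (b i)) x (b i) := by
  have hf' : DifferentiableAt ℝ (fderiv ℝ f) x :=
    (hf.fderiv_right one_add_one_eq_two.le).differentiable one_ne_zero x
  simp [laplacian_eq_iteratedFDeriv_orthonormalBasis f b, iteratedFDeriv_two_apply,
    fderiv_clm_apply hf' (differentiableAt_const _)]

theorem continuous_uncurry_laplacian {F : Type*} [NormedAddCommGroup F] [NormedSpace ℝ F]
    {u : ℝ → E → F} (hu : ContDiff ℝ 2 (uncurry u)) :
    Continuous (uncurry fun s ↦ Δ (u s)) := by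
  have hspace (s : ℝ) : ContDiff ℝ 2 (u s) := hu.comp (contDiff_prodMk_right s)
  simp only [uncurry_def, laplacian_eq_sum_fderiv_fderiv (stdOrthonormalBasis ℝ E) (hspace _)]
  exact continuous_finsetSum _ fun i _ ↦ continuous_uncurry_fderiv_fderiv_apply hu _

variable [MeasurableSpace E] [BorelSpace E] {μ : Measure E} [μ.IsAddHaarMeasure]
  {u : ℝ → E → ℝ} {K : Set E} {t : ℝ}

theorem integral_intervalIntegral_mul_timePrimitive_laplacian_nonpos (hu : ContDiff ℝ 2 (uncurry u))
    (hK : IsCompact K) (huK : ∀ s ∈ uIcc 0 t, ∀ x ∉ K, u s x = 0) :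
    ∫ x, (∫ s in (0:ℝ)..t, u s x * timePrimitive (fun r ↦ Δ (u r)) s x) ∂μ ≤ 0 := by
  let b := stdOrthonormalBasis ℝ E
  let h i : ℝ → E → ℝ := fun s x ↦ fderiv ℝ (fun y ↦ fderiv ℝ (u s) y (b i)) x (b i)
  have hspace (s : ℝ) : ContDiff ℝ 2 (u s) := hu.comp (contDiff_prodMk_right s)
  have hh i : Continuous (uncurry (h i)) := continuous_uncurry_fderiv_fderiv_apply hu (b i)
  have huh i : Continuous (uncurry fun s x ↦ u s x * timePrimitive (h i) s x) :=
    hu.continuous.mul (continuous_uncurry_timePrimitive (hh i))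
  have hprim (s : ℝ) (x : E) :
      timePrimitive (fun r ↦ Δ (u r)) s x = ∑ i, timePrimitive (h i) s x := by
    simp only [timePrimitive, h, laplacian_eq_sum_fderiv_fderiv b (hspace _)]
    exact intervalIntegral.integral_finsetSum fun i _ ↦
      ((hh i).uncurry_right x).intervalIntegrable _ _
  have htime (x : E) : ∫ s in (0:ℝ)..t, u s x * timePrimitive (fun r ↦ Δ (u r)) s x
      = ∑ i, ∫ s in (0:ℝ)..t, u s x * timePrimitive (h i) s x := by
    simp only [hprim, Finset.mul_sum]
    exact intervalIntegral.integral_finsetSum fun i _ ↦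
      ((huh i).uncurry_right x).intervalIntegrable _ _
  simp only [htime]
  rw [integral_finsetSum _ fun i _ ↦ integrable_intervalIntegral_of_eq_zero_off_compact (huh i) hK
    fun s hs x hx ↦ by rw [huK s hs x hx, zero_mul]]
  refine Finset.sum_nonpos fun i _ ↦ ?_
  rw [integral_intervalIntegral_mul_timePrimitive_fderiv_fderiv hu hK huK, neg_nonpos]
  exact integral_nonneg fun x ↦ by positivity

theorem damped_wave_spacetime_L2_bound_general {V : E → ℝ} (hVpos : ∀ x, 0 < V x)
    (hu : ContDiff ℝ 2 (uncurry u)) (ht : 0 ≤ t)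
    (hPDE : ∀ s ∈ Icc 0 t, ∀ x,
      deriv (deriv fun r ↦ u r x) s - Δ (u s) x + V x * u s x + deriv (fun r ↦ u r x) s = 0)
    (hK : IsCompact K) (huK : ∀ s ∈ Icc 0 t, ∀ x ∉ K, u s x = 0)
    (hfV : Integrable (fun x ↦ (deriv (fun s ↦ u s x) 0 + u 0 x) ^ 2 / V x) μ) :
    ∫ s in (0:ℝ)..t, ∫ x, u s x ^ 2 ∂μ
      ≤ 1 / 2 * ∫ x, u 0 x ^ 2 ∂μ
        + 1 / 2 * ∫ x, (deriv (fun s ↦ u s x) 0 + u 0 x) ^ 2 / V x ∂μ := by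
  rw [← uIcc_of_le ht] at hPDE huK
  have hpointwise (x : E) : ∫ s in (0:ℝ)..t, u s x ^ 2
      ≤ 1 / 2 * u 0 x ^ 2 + 1 / 2 * ((deriv (fun s ↦ u s x) 0 + u 0 x) ^ 2 / V x)
        + ∫ s in (0:ℝ)..t, u s x * timePrimitive (fun r ↦ Δ (u r)) s x :=
    damped_oscillator_integral_sq_le (hVpos x) (hu.comp (contDiff_prodMk_left x))
      fun s hs ↦ hPDE s hs x
  have hsq : Continuous (uncurry fun s x ↦ u s x ^ 2) := hu.continuous.pow 2
  have hsqK : ∀ s ∈ uIcc 0 t, ∀ x ∉ K, u s x ^ 2 = 0 := fun s hs x hx ↦ by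
    rw [huK s hs x hx, zero_pow two_ne_zero]
  have hcross : Integrable
      (fun x ↦ ∫ s in (0:ℝ)..t, u s x * timePrimitive (fun r ↦ Δ (u r)) s x) μ :=
    integrable_intervalIntegral_of_eq_zero_off_compact
      (hu.continuous.mul (continuous_uncurry_timePrimitive (continuous_uncurry_laplacian hu))) hK
      fun s hs x hx ↦ by rw [huK s hs x hx, zero_mul]
  have hdata : Integrable (fun x ↦ 1 / 2 * u 0 x ^ 2) μ :=
    ((hsq.uncurry_left 0).integrable_of_hasCompactSupport
      (.intro hK (hsqK 0 left_mem_uIcc))).const_mul _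
  have hmono := integral_mono (integrable_intervalIntegral_of_eq_zero_off_compact hsq hK hsqK)
    ((hdata.add (hfV.const_mul (1 / 2))).add hcross) hpointwise
  rw [integral_add' (hdata.add (hfV.const_mul _)) hcross, integral_add' hdata (hfV.const_mul _),
    integral_const_mul, integral_const_mul,
    ← intervalIntegral_integral_swap_of_eq_zero_off_compact hsq hK hsqK] at hmono
  exact hmono.trans <| add_le_of_nonpos_right <|
    integral_intervalIntegral_mul_timePrimitive_laplacian_nonpos hu hK huK

end Laplacian

theorem damped_wave_spacetime_L2_bound (n : ℕ) (hn : 1 ≤ n)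
    (V : EuclideanSpace ℝ (Fin n) → ℝ)
    (hVcont : Continuous V) (hVbdd : ∃ M, ∀ x, |V x| ≤ M)
    (hVpos : ∀ x, 0 < V x)
    (u : ℝ → EuclideanSpace ℝ (Fin n) → ℝ)
    (u₀ u₁ : EuclideanSpace ℝ (Fin n) → ℝ)
    (hu : ContDiff ℝ (⊤ : ℕ∞) (fun p : ℝ × EuclideanSpace ℝ (Fin n) => u p.1 p.2))
    (hu₀smooth : ContDiff ℝ (⊤ : ℕ∞) u₀) (hu₀supp : HasCompactSupport u₀)
    (hu₁smooth : ContDiff ℝ (⊤ : ℕ∞) u₁) (hu₁supp : HasCompactSupport u₁)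
    (hPDE : ∀ t, 0 ≤ t → ∀ x,
      deriv (fun s => deriv (fun r => u r x) s) t - lap (u t) x + V x * u t x
        + deriv (fun s => u s x) t = 0)
    (hinit0 : ∀ x, u 0 x = u₀ x)
    (hinit1 : ∀ x, deriv (fun s => u s x) 0 = u₁ x)
    (hsupp : ∀ T, 0 < T → ∃ R, 0 < R ∧ ∀ t ∈ Set.Icc (0:ℝ) T, ∀ x,
      R ≤ ‖x‖ → u t x = 0)
    (hK : Integrable (fun x => (u₁ x + u₀ x) ^ 2 / V x)) :
    ∀ t, 0 ≤ t →
      (∫ s in (0:ℝ)..t, ∫ x, (u s x) ^ 2) ≤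
        (1/2) * (∫ x, (u₀ x) ^ 2) + ∫ x, (u₁ x + u₀ x) ^ 2 / V x := by
  intro t ht
  obtain ⟨R, -, hR⟩ := hsupp (t + 1) (by linarith)
  obtain rfl : u 0 = u₀ := funext hinit0
  obtain rfl : (fun x ↦ deriv (fun s ↦ u s x) 0) = u₁ := funext hinit1
  have hbound := damped_wave_spacetime_L2_bound_general hVpos (hu.of_le (by norm_cast)) ht
    (fun s hs x ↦ lap_eq_laplacian (u s) ▸ hPDE s hs.1 x) (isCompact_closedBall 0 R)
    (fun s hs x hx ↦ hR s ⟨hs.1, by linarith [hs.2]⟩ x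
      (not_le.1 (mt mem_closedBall_zero_iff.2 hx)).le) hK
  have hnonneg : 0 ≤ ∫ x, (deriv (fun s ↦ u s x) 0 + u 0 x) ^ 2 / V x :=
    integral_nonneg fun x ↦ div_nonneg (sq_nonneg _) (hVpos x).le
  linarith
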